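/- arXiv:2506.02220 — 3 statements merged into one kernel-verified Lean document; each statement's English description precedes it below -/
import Mathlib

section
/- Let k ≥ 1 and A a real symmetric k×k matrix. For each β > 0 let S*_β be the unique maximizer over 𝒢 of S ↦ β tr(AS) + (1/2) log det S. Then lim_{β→∞} tr(A S*_β) = max_{S ∈ 𝒢} tr(AS); that is, the value tr(A S*_β) converges as β → ∞ to the optimal value of the semidefinite relaxation of the weighted max-cut problem with edge-weight matrix A. -/
open MeasureTheory Matrix Filter Topology

noncomputable section

/-- `𝒢`: the set of `k × k` real positive semidefinite matrices with unit diagonal. -/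
def unitDiagPSD (k : ℕ) : Set (Matrix (Fin k) (Fin k) ℝ) :=
  {S | S.PosSemidef ∧ ∀ i, S i i = 1}

/-- The positive definite matrices with unit diagonal (the elements of `𝒢` at which
`log det` is finite; with the convention `log det S = -∞` for singular `S`,
maximizing `β tr(AS) + (1/2) log det S` over `𝒢` is the same as maximizing over this set). -/
def unitDiagPD (k : ℕ) : Set (Matrix (Fin k) (Fin k) ℝ) :=
  {S | S.PosDef ∧ ∀ i, S i i = 1}

/-- The objective `S ↦ β tr(AS) + (1/2) log det S`. -/
def gwObj {k : ℕ} (β : ℝ) (A S : Matrix (Fin k) (Fin k) ℝ) : ℝ :=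
  β * (A * S).trace + (1 / 2) * Real.log S.det

/-!
The term `(1/2) log det S` is a barrier: it is nonpositive on `unitDiagPD k` and does not depend
on `β`. Comparing `S*_β` with a fixed competitor `T` gives
`tr(A S*_β) ≥ tr(A T) + log det T / (2 β)`, so the limit inferior of `tr(A S*_β)` is at
least every value of `tr(A ·)` on `unitDiagPD k`. The supremum of these values is the
maximum over `𝒢`, because the segment from any `S ∈ 𝒢` to the identity consists, apart from
`S`, of positive definite matrices.
-/

section Barrier

variable {α : Type*} {s : Set α} {f g : α → ℝ} {x : ℝ → α} {q : ℝ}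

theorem add_div_le_of_isMaxOn_mul_add {β C : ℝ} {y z : α} (hβ : 0 < β) (hy : y ∈ s) (hz : z ∈ s)
    (hC : C ∈ upperBounds (g '' s)) (hmax : IsMaxOn (fun w => β * f w + g w) s z) :
    f y + (g y - C) / β ≤ f z := by
  have hcompare : β * f y + g y ≤ β * f z + g z := hmax hy
  have hgz : g z ≤ C := hC (Set.mem_image_of_mem g hz)
  rw [← le_sub_iff_add_le', div_le_iff₀' hβ]
  linarith

theorem tendsto_of_isMaxOn_mul_add (hmem : ∀ᶠ β in atTop, x β ∈ s)
    (hmax : ∀ᶠ β in atTop, IsMaxOn (fun y => β * f y + g y) s (x β))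
    (hg : BddAbove (g '' s)) (hq : IsLUB (f '' s) q) :
    Tendsto (fun β => f (x β)) atTop (𝓝 q) := by
  obtain ⟨C, hC⟩ := hg
  refine tendsto_order.2 ⟨fun a ha => ?_, fun b hb => ?_⟩
  · obtain ⟨_, ⟨y, hy, rfl⟩, hay, -⟩ := hq.exists_between ha
    have hlim : Tendsto (fun β : ℝ => f y + (g y - C) / β) atTop (𝓝 (f y)) := by
      simpa using (tendsto_const_nhds (x := f y)).add (tendsto_id.const_div_atTop (g y - C))
    filter_upwards [hmem, hmax, eventually_gt_atTop 0, hlim.eventually_const_lt hay]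
      with β hxs hxmax hβ haβ
    exact haβ.trans_le (add_div_le_of_isMaxOn_mul_add hβ hy hxs hC hxmax)
  · filter_upwards [hmem] with β hxs
    exact (hq.1 (Set.mem_image_of_mem f hxs)).trans_lt hb

end Barrier

theorem isLUB_image_of_subset_closure {X Y : Type*} [TopologicalSpace X] [TopologicalSpace Y]
    [Preorder Y] [ClosedIicTopology Y] {f : X → Y} {s t : Set X} {q : Y} (hst : s ⊆ t)
    (hts : t ⊆ closure s) (hf : ContinuousOn f t) (hq : IsLUB (f '' t) q) :
    IsLUB (f '' s) q := by
  have himage : f '' t ⊆ closure (f '' s) := by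
    rintro _ ⟨y, hy, rfl⟩
    exact ((hf y hy).mono hst).mem_closure_image (hts hy)
  exact (isLUB_iff_of_subset_of_subset_closure (Set.image_mono hst) himage).2 hq

section PosDef

variable {n : Type*}

open ComplexOrder in
theorem posDef_of_mem_openSegment {𝕜 : Type*} [RCLike 𝕜] {S T U : Matrix n n 𝕜}
    (hS : S.PosSemidef) (hT : T.PosDef) (hU : U ∈ openSegment ℝ S T) : U.PosDef := by
  obtain ⟨a, b, ha, hb, -, rfl⟩ := hU
  exact PosDef.posSemidef_add (hS.smul ha.le) (hT.smul hb)

theorem log_det_le_trace_sub_card [Fintype n] [DecidableEq n] {S : Matrix n n ℝ} (hS : S.PosDef) :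
    Real.log S.det ≤ S.trace - Fintype.card n := by
  have hdet : S.det = ∏ i, hS.isHermitian.eigenvalues i :=
    hS.isHermitian.det_eq_prod_eigenvalues
  have htrace : S.trace = ∑ i, hS.isHermitian.eigenvalues i :=
    hS.isHermitian.trace_eq_sum_eigenvalues
  calc Real.log S.det = ∑ i, Real.log (hS.isHermitian.eigenvalues i) := by
        rw [hdet, Real.log_prod fun i _ => (hS.eigenvalues_pos i).ne']
    _ ≤ ∑ i, (hS.isHermitian.eigenvalues i - 1) :=
        Finset.sum_le_sum fun i _ => Real.log_le_sub_one_of_pos (hS.eigenvalues_pos i)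
    _ = S.trace - Fintype.card n := by simp [htrace]

end PosDef

section UnitDiag

variable {k : ℕ}

theorem unitDiagPD_subset_unitDiagPSD : unitDiagPD k ⊆ unitDiagPSD k :=
  fun _ hS => ⟨hS.1.posSemidef, hS.2⟩

theorem openSegment_one_subset_unitDiagPD {S : Matrix (Fin k) (Fin k) ℝ}
    (hS : S ∈ unitDiagPSD k) : openSegment ℝ S 1 ⊆ unitDiagPD k := by
  refine fun U hU => ⟨posDef_of_mem_openSegment hS.1 PosDef.one hU, fun i => ?_⟩
  obtain ⟨a, b, -, -, hab, rfl⟩ := hU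
  simp [hS.2 i, hab]

theorem unitDiagPSD_subset_closure_unitDiagPD : unitDiagPSD k ⊆ closure (unitDiagPD k) :=
  fun S hS => closure_mono (openSegment_one_subset_unitDiagPD hS)
    (segment_subset_closure_openSegment (left_mem_segment ℝ S 1))

theorem log_det_nonpos_of_mem_unitDiagPD {S : Matrix (Fin k) (Fin k) ℝ}
    (hS : S ∈ unitDiagPD k) : Real.log S.det ≤ 0 := by
  simpa [trace, hS.2] using log_det_le_trace_sub_card hS.1

theorem stmt4_general {f : Matrix (Fin k) (Fin k) ℝ → ℝ} (hf : ContinuousOn f (unitDiagPSD k))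
    {Sstar : ℝ → Matrix (Fin k) (Fin k) ℝ} (hmem : ∀ᶠ β in atTop, Sstar β ∈ unitDiagPD k)
    (hmax : ∀ᶠ β in atTop,
      IsMaxOn (fun S => β * f S + (1 / 2) * Real.log S.det) (unitDiagPD k) (Sstar β))
    {q : ℝ} (hq : IsLUB (f '' unitDiagPSD k) q) :
    Tendsto (fun β => f (Sstar β)) atTop (𝓝 q) := by
  have hbarrier : BddAbove ((fun S => (1 / 2) * Real.log S.det) '' unitDiagPD k) := by
    refine ⟨0, Set.forall_mem_image.2 fun S hS => ?_⟩
    linarith [log_det_nonpos_of_mem_unitDiagPD hS]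
  exact tendsto_of_isMaxOn_mul_add hmem hmax hbarrier <|
    isLUB_image_of_subset_closure unitDiagPD_subset_unitDiagPSD
      unitDiagPSD_subset_closure_unitDiagPD hf hq

end UnitDiag

/-- For each `β > 0` let `S*_β` be the unique maximizer over `𝒢` of
`S ↦ β tr(AS) + (1/2) log det S`. Then `tr(A S*_β)` converges, as `β → ∞`, to the optimal
value `max_{S ∈ 𝒢} tr(AS)` of the max-cut SDP relaxation. -/
theorem stmt4 {k : ℕ} (hk : 1 ≤ k) (A : Matrix (Fin k) (Fin k) ℝ) (hA : A.IsSymm)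
    (Sstar : ℝ → Matrix (Fin k) (Fin k) ℝ)
    (hmem : ∀ β : ℝ, 0 < β → Sstar β ∈ unitDiagPD k)
    (hmax : ∀ β : ℝ, 0 < β → IsMaxOn (gwObj β A) (unitDiagPD k) (Sstar β))
    (huniq : ∀ β : ℝ, 0 < β → ∀ T ∈ unitDiagPD k,
      IsMaxOn (gwObj β A) (unitDiagPD k) T → T = Sstar β)
    (qstar : ℝ) (hq : IsGreatest ((fun S => (A * S).trace) '' unitDiagPSD k) qstar) :
    Tendsto (fun β : ℝ => (A * Sstar β).trace) atTop (𝓝 qstar) :=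
  stmt4_general (f := fun S => (A * S).trace) (by fun_prop)
    ((eventually_gt_atTop 0).mono hmem) ((eventually_gt_atTop 0).mono hmax) hq.isLUB

end
end

section
/- Let d ≥ 1, let P ⊂ ℝ^d be compact with nonempty interior, and let μ_P denote Lebesgue measure restricted to P. Let f : P → ℝ be smooth and strictly concave, with a unique maximizer x* lying in the interior of P at which the Hessian ∇²f(x*) is negative definite. Let g : P → ℝ be smooth, nonnegative, bounded, with g(x*) > 0. Then for every b ∈ (0, 1/2), lim_{n→∞} [ ∫_{P ∩ B(x*, n^{−1/2+b})} e^{n f(x)} g(x) dx ] / [ ∫_{P} e^{n f(x)} g(x) dx ] = 1; that is, a random variable with (unnormalized) density e^{n f(x)} g(x) on P concentrates on the ball of radius n^{−1/2+b} around x* as n → ∞. -/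
open MeasureTheory Matrix Filter Topology

noncomputable section

/-!
Taylor expansion at the maximizer, coercivity of the Hessian and compactness of `P` give
`f y ≤ f x* - c ‖y - x*‖²` on all of `P`. Hence the mass outside the ball of radius `t^(-1/2+b)` is
at most `exp (t f(x*)) * exp (-c t^(2b)) * ∫_P g`. Since `f` is differentiable at `x*`, it drops by
`O(1/t)` only on the ball of radius `1/t`, so the total mass is at least of order
`exp (t f(x*)) * t^(-d)`. The ratio of the two decays like `t^d exp (-c t^(2b))`.
-/

section Calculus

variable {E F : Type*} [NormedAddCommGroup E] [NormedSpace ℝ E]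
  [NormedAddCommGroup F] [NormedSpace ℝ F]

lemma isLittleO_taylor_two {f : E → F} {f' : E → E →L[ℝ] F} {f'' : E →L[ℝ] E →L[ℝ] F} {x : E}
    (hf : ∀ᶠ y in 𝓝 x, HasFDerivAt f (f' y) y) (hf' : HasFDerivAt f' f'' x) :
    (fun y ↦ f y - f x - f' x (y - x) - (1 / 2 : ℝ) • f'' (y - x) (y - x))
      =o[𝓝 x] fun y ↦ ‖y - x‖ ^ 2 := by
  obtain ⟨r, hr, hball⟩ := Metric.eventually_nhds_iff_ball.1 hf
  have hsymm : ∀ v w, f'' v w = f'' w v :=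
    second_derivative_symmetric_of_eventually_of_real hf hf'
  let R : E → F := fun y ↦ f y - f' x (y - x) - (1 / 2 : ℝ) • f'' (y - x) (y - x)
  have hR : ∀ y ∈ Metric.ball x r,
      HasFDerivWithinAt R (f' y - f' x - f'' (y - x)) (Metric.ball x r) y := by
    intro y hy
    have hsub : HasFDerivAt (fun z ↦ z - x) (.id ℝ E) y := (hasFDerivAt_id y).sub_const x
    have hquad := (f''.hasFDerivAt_of_bilinear hsub hsub).const_smul (1 / 2 : ℝ)
    refine ((((hball y hy).sub ((f' x).hasFDerivAt.comp y hsub)).sub hquad).congr_fderiv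
      ?_).hasFDerivWithinAt
    ext v
    suffices h : (1 / 2 : ℝ) • (f'' (y - x) v + f'' v (y - x)) = f'' (y - x) v by simpa using h
    rw [hsymm v, ← two_smul ℝ, smul_smul, one_div_mul_cancel two_ne_zero, one_smul]
  have hR' : (fun y ↦ f' y - f' x - f'' (y - x)) =o[𝓝 x] fun y ↦ ‖y - x‖ ^ 1 := by
    simpa using hf'.isLittleO.norm_right
  rw [← Metric.isOpen_ball.nhdsWithin_eq (Metric.mem_ball_self hr)] at hR' ⊢
  refine ((convex_ball x r).isLittleO_pow_succ (Metric.mem_ball_self hr) hR hR').congr_left ?_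
  intro y
  simp only [R, sub_self, map_zero, smul_zero, sub_zero]
  abel

lemma isCoercive_of_forall_pos [FiniteDimensional ℝ E] {B : E →L[ℝ] E →L[ℝ] ℝ}
    (hB : ∀ v, v ≠ 0 → 0 < B v v) : IsCoercive B := by
  obtain ⟨c, hc, hsphere⟩ : ∃ c > 0, ∀ v ∈ Metric.sphere (0 : E) 1, c ≤ B v v :=
    (isCompact_sphere 0 1).exists_forall_le' (by fun_prop)
      fun v hv ↦ hB v (ne_zero_of_mem_unit_sphere ⟨v, hv⟩)
  refine ⟨c, hc, fun v ↦ ?_⟩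
  rcases eq_or_ne v 0 with rfl | hv
  · simp
  have hv' : 0 < ‖v‖ := norm_pos_iff.2 hv
  have hunit : c ≤ ‖v‖⁻¹ * (‖v‖⁻¹ * B v v) := by
    simpa using hsphere (‖v‖⁻¹ • v) (by simp [norm_smul, hv'.ne'])
  calc c * ‖v‖ * ‖v‖ ≤ ‖v‖⁻¹ * (‖v‖⁻¹ * B v v) * ‖v‖ * ‖v‖ := by gcongr
    _ = B v v := by field_simp

lemma eventually_le_sub_mul_norm_sq_of_hessian_neg [FiniteDimensional ℝ E] {f : E → ℝ} {x : E}
    (hf : ContDiffAt ℝ 2 f x) (hcrit : fderiv ℝ f x = 0)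
    (hneg : ∀ v, v ≠ 0 → iteratedFDeriv ℝ 2 f x ![v, v] < 0) :
    ∃ c > 0, ∀ᶠ y in 𝓝 x, f y ≤ f x - c * ‖y - x‖ ^ 2 := by
  obtain ⟨c, hc, hcoer⟩ : IsCoercive (-fderiv ℝ (fderiv ℝ f) x) :=
    isCoercive_of_forall_pos fun v hv ↦ by
      simpa [iteratedFDeriv_two_apply] using hneg v hv
  have hdiff : ∀ᶠ y in 𝓝 x, HasFDerivAt f (fderiv ℝ f y) y :=
    (hf.eventually (by simp)).mono fun y hy ↦ (hy.differentiableAt (by simp)).hasFDerivAt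
  have hdiff' : HasFDerivAt (fderiv ℝ f) (fderiv ℝ (fderiv ℝ f) x) x :=
    ((hf.fderiv_right (m := 1) (by norm_num)).differentiableAt (by simp)).hasFDerivAt
  refine ⟨c / 4, by positivity, ?_⟩
  filter_upwards [(isLittleO_taylor_two hdiff hdiff').def (by positivity : 0 < c / 4)] with y hy
  have htaylor := (le_abs_self _).trans hy
  have hcoer_y := hcoer (y - x)
  simp only [hcrit, _root_.zero_apply, _root_.neg_apply, smul_eq_mul,
    norm_pow, norm_norm] at htaylor hcoer_y
  linarith

lemma exists_forall_le_sub_mul_norm_sq {G : Type*} [NormedAddCommGroup G] {P : Set G}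
    {f : G → ℝ} {x : G} (hP : IsCompact P) (hf : ContinuousOn f P)
    (hlt : ∀ y ∈ P, y ≠ x → f y < f x)
    (hloc : ∃ c > 0, ∀ᶠ y in 𝓝 x, f y ≤ f x - c * ‖y - x‖ ^ 2) :
    ∃ c > 0, ∀ y ∈ P, f y ≤ f x - c * ‖y - x‖ ^ 2 := by
  obtain ⟨c, hc, hnear⟩ := hloc
  obtain ⟨U, hU, hUo, hxU⟩ := eventually_nhds_iff.1 hnear
  have hne : ∀ y ∈ P \ U, y ≠ x := fun y hy hyx ↦ hy.2 (hyx ▸ hxU)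
  have hpos : ∀ y ∈ P \ U, 0 < ‖y - x‖ ^ 2 := fun y hy ↦
    pow_pos (norm_pos_iff.2 (sub_ne_zero.2 (hne y hy))) 2
  obtain ⟨c', hc', hfar⟩ : ∃ c' > 0, ∀ y ∈ P \ U, c' ≤ (f x - f y) / ‖y - x‖ ^ 2 :=
    (hP.diff hUo).exists_forall_le'
      ((continuousOn_const.sub (hf.mono Set.sdiff_subset)).div (by fun_prop)
        fun y hy ↦ (hpos y hy).ne')
      fun y hy ↦ div_pos (sub_pos.2 (hlt y hy.1 (hne y hy))) (hpos y hy)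
  refine ⟨min c c', lt_min hc hc', fun y hy ↦ ?_⟩
  by_cases hyU : y ∈ U
  · calc f y ≤ f x - c * ‖y - x‖ ^ 2 := hU y hyU
      _ ≤ f x - min c c' * ‖y - x‖ ^ 2 := by gcongr; exact min_le_left c c'
  · calc f y ≤ f x - c' * ‖y - x‖ ^ 2 :=
          le_sub_comm.1 ((le_div_iff₀ (hpos y ⟨hy, hyU⟩)).1 (hfar y ⟨hy, hyU⟩))
      _ ≤ f x - min c c' * ‖y - x‖ ^ 2 := by gcongr; exact min_le_right c c'

lemma eventually_forall_closedBall_inv_le_exp_mul {f g : E → ℝ} {x : E}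
    (hf : DifferentiableAt ℝ f x) (hg : ContinuousAt g x) (hgx : 0 < g x) :
    ∃ m > 0, ∀ᶠ t : ℝ in atTop, ∀ y ∈ Metric.closedBall x t⁻¹,
      m * Real.exp (t * f x) ≤ Real.exp (t * f y) * g y := by
  obtain ⟨L, hL, hlip⟩ := hf.isBigO_sub.exists_pos
  have hnear := hlip.bound.and (hg.eventually (lt_mem_nhds (half_lt_self hgx)))
  refine ⟨Real.exp (-L) * (g x / 2), by positivity, ?_⟩
  filter_upwards [tendsto_inv_atTop_zero.eventually (eventually_closedBall_subset hnear),
    eventually_gt_atTop 0] with t hball ht y hy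
  obtain ⟨hfy, hgy⟩ := hball hy
  have hdrop : f x - f y ≤ L * t⁻¹ := calc
    f x - f y ≤ ‖f y - f x‖ := by rw [norm_sub_rev]; exact le_abs_self _
    _ ≤ L * ‖y - x‖ := hfy
    _ ≤ L * t⁻¹ := by gcongr; exact mem_closedBall_iff_norm.1 hy
  have hexponent : -L + t * f x ≤ t * f y := by
    rw [← div_eq_mul_inv, le_div_iff₀ ht] at hdrop
    linarith
  calc Real.exp (-L) * (g x / 2) * Real.exp (t * f x)
      = Real.exp (-L + t * f x) * (g x / 2) := by rw [Real.exp_add]; ring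
    _ ≤ Real.exp (t * f y) * g y := by gcongr

lemma iteratedFDerivWithin_eq_iteratedFDeriv_of_mem_nhds {f : E → F} {s : Set E} {x : E}
    (hs : s ∈ 𝓝 x) (n : ℕ) : iteratedFDerivWithin ℝ n f s x = iteratedFDeriv ℝ n f x := by
  rw [← iteratedFDerivWithin_univ]
  exact iteratedFDerivWithin_congr_set (eventuallyEq_univ.2 hs) n

end Calculus

section Asymptotics

lemma mul_rpow_neg_half_add_sq {t : ℝ} (ht : 0 < t) (b : ℝ) :
    t * (t ^ (-(1 / 2 : ℝ) + b)) ^ 2 = t ^ (2 * b) := by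
  rw [← Real.rpow_mul_natCast ht.le, mul_comm, ← Real.rpow_add_one ht.ne']
  congr 1
  push_cast
  ring

lemma tendsto_pow_mul_exp_neg_mul_rpow_atTop_nhds_zero (k : ℕ) {a c : ℝ} (ha : 0 < a)
    (hc : 0 < c) : Tendsto (fun t : ℝ ↦ t ^ k * Real.exp (-c * t ^ a)) atTop (𝓝 0) := by
  refine ((tendsto_rpow_mul_exp_neg_mul_atTop_nhds_zero (k / a) c hc).comp
    (tendsto_rpow_atTop ha)).congr' ?_
  filter_upwards [eventually_ge_atTop 0] with t ht
  rw [Function.comp_apply, ← Real.rpow_mul ht, mul_div_cancel₀ _ ha.ne', Real.rpow_natCast]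

end Asymptotics

lemma tendsto_setIntegral_inter_div_nhds_one {ι α : Type*} [MeasurableSpace α] {μ : Measure α}
    {l : Filter ι} {w : ι → α → ℝ} {s : Set α} {B : ι → Set α}
    (hB : ∀ i, MeasurableSet (B i)) (hw : ∀ i, IntegrableOn (w i) s μ)
    (hne : ∀ᶠ i in l, ∫ y in s, w i y ∂μ ≠ 0)
    (hlim : Tendsto (fun i ↦ (∫ y in s \ B i, w i y ∂μ) / ∫ y in s, w i y ∂μ) l (𝓝 0)) :
    Tendsto (fun i ↦ (∫ y in s ∩ B i, w i y ∂μ) / ∫ y in s, w i y ∂μ) l (𝓝 1) := by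
  have hsub := hlim.const_sub 1
  rw [sub_zero] at hsub
  refine hsub.congr' ?_
  filter_upwards [hne] with i hi
  rw [eq_div_iff hi, sub_mul, one_mul, div_mul_cancel₀ _ hi, sub_eq_iff_eq_add]
  exact (integral_inter_add_sdiff (hB i) (hw i)).symm

section Laplace

variable {E : Type*} [NormedAddCommGroup E] [MeasurableSpace E] [BorelSpace E]
  {μ : Measure E} {P : Set E} {f g : E → ℝ} {x : E}

lemma setIntegral_diff_ball_exp_mul_le {c t ρ : ℝ} (hP : MeasurableSet P)
    (hfle : ∀ y ∈ P, f y ≤ f x - c * ‖y - x‖ ^ 2) (hg : IntegrableOn g P μ)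
    (hg0 : ∀ y ∈ P, 0 ≤ g y) (hint : IntegrableOn (fun y ↦ Real.exp (t * f y) * g y) P μ)
    (hc : 0 ≤ c) (ht : 0 ≤ t) (hρ : 0 ≤ ρ) :
    ∫ y in P \ Metric.ball x ρ, Real.exp (t * f y) * g y ∂μ ≤
      Real.exp (t * f x) * Real.exp (-c * (t * ρ ^ 2)) * ∫ y in P, g y ∂μ := by
  have hexp : ∀ y ∈ P \ Metric.ball x ρ,
      Real.exp (t * f y) ≤ Real.exp (t * f x) * Real.exp (-c * (t * ρ ^ 2)) := by
    rintro y ⟨hyP, hyρ⟩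
    rw [mem_ball_iff_norm, not_lt] at hyρ
    rw [← Real.exp_add, Real.exp_le_exp]
    calc t * f y ≤ t * (f x - c * ‖y - x‖ ^ 2) := by gcongr; exact hfle y hyP
      _ ≤ t * (f x - c * ρ ^ 2) := by gcongr
      _ = t * f x + -c * (t * ρ ^ 2) := by ring
  calc ∫ y in P \ Metric.ball x ρ, Real.exp (t * f y) * g y ∂μ
      ≤ ∫ y in P \ Metric.ball x ρ,
          Real.exp (t * f x) * Real.exp (-c * (t * ρ ^ 2)) * g y ∂μ :=
        setIntegral_mono_on (hint.mono_set Set.sdiff_subset)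
          ((hg.mono_set Set.sdiff_subset).const_mul _) (hP.diff measurableSet_ball)
          fun y hy ↦ mul_le_mul_of_nonneg_right (hexp y hy) (hg0 y hy.1)
    _ = Real.exp (t * f x) * Real.exp (-c * (t * ρ ^ 2)) *
          ∫ y in P \ Metric.ball x ρ, g y ∂μ := integral_const_mul _ _
    _ ≤ Real.exp (t * f x) * Real.exp (-c * (t * ρ ^ 2)) * ∫ y in P, g y ∂μ := by
        refine mul_le_mul_of_nonneg_left ?_ (by positivity)
        exact setIntegral_mono_set hg (ae_restrict_of_forall_mem hP hg0)
          Set.sdiff_subset.eventuallyLE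

variable [NormedSpace ℝ E] [FiniteDimensional ℝ E] [μ.IsAddHaarMeasure]

lemma eventually_le_setIntegral_exp_mul (hP : MeasurableSet P) (hPx : P ∈ 𝓝 x)
    (hf : DifferentiableAt ℝ f x) (hg0 : ∀ y ∈ P, 0 ≤ g y) (hg : ContinuousAt g x)
    (hgx : 0 < g x) (hint : ∀ t, IntegrableOn (fun y ↦ Real.exp (t * f y) * g y) P μ) :
    ∃ κ > 0, ∀ᶠ t : ℝ in atTop, κ * Real.exp (t * f x) / t ^ Module.finrank ℝ E ≤
      ∫ y in P, Real.exp (t * f y) * g y ∂μ := by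
  obtain ⟨m, hm, hpointwise⟩ := eventually_forall_closedBall_inv_le_exp_mul hf hg hgx
  have hunit : 0 < μ.real (Metric.ball (0 : E) 1) :=
    ENNReal.toReal_pos (Metric.measure_ball_pos μ 0 one_pos).ne' measure_ball_lt_top.ne
  refine ⟨m * μ.real (Metric.ball (0 : E) 1), by positivity, ?_⟩
  filter_upwards [hpointwise, tendsto_inv_atTop_zero.eventually (eventually_closedBall_subset hPx),
    eventually_gt_atTop 0] with t hle hballP ht
  calc m * μ.real (Metric.ball (0 : E) 1) * Real.exp (t * f x) / t ^ Module.finrank ℝ E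
      = m * Real.exp (t * f x) * μ.real (Metric.closedBall x t⁻¹) := by
        rw [Measure.addHaar_real_closedBall μ x (inv_nonneg.2 ht.le), inv_pow]
        ring
    _ ≤ ∫ y in Metric.closedBall x t⁻¹, Real.exp (t * f y) * g y ∂μ :=
        setIntegral_ge_of_const_le_real measurableSet_closedBall measure_closedBall_lt_top.ne hle
          ((hint t).mono_set hballP)
    _ ≤ ∫ y in P, Real.exp (t * f y) * g y ∂μ :=
        setIntegral_mono_set (hint t) (ae_restrict_of_forall_mem hP fun y hy ↦
          mul_nonneg (Real.exp_nonneg _) (hg0 y hy)) hballP.eventuallyLE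

lemma tendsto_setIntegral_ball_div_of_le_sub_mul_norm_sq {b c : ℝ} (hP : MeasurableSet P)
    (hPx : P ∈ 𝓝 x) (hf : DifferentiableAt ℝ f x) (hc : 0 < c)
    (hfle : ∀ y ∈ P, f y ≤ f x - c * ‖y - x‖ ^ 2) (hgint : IntegrableOn g P μ)
    (hg0 : ∀ y ∈ P, 0 ≤ g y) (hg : ContinuousAt g x) (hgx : 0 < g x)
    (hint : ∀ t, IntegrableOn (fun y ↦ Real.exp (t * f y) * g y) P μ) (hb : 0 < b) :
    Tendsto (fun t : ℝ ↦
        (∫ y in P ∩ Metric.ball x (t ^ (-(1 / 2 : ℝ) + b)), Real.exp (t * f y) * g y ∂μ) /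
          ∫ y in P, Real.exp (t * f y) * g y ∂μ)
      atTop (𝓝 1) := by
  have hw0 : ∀ t, ∀ y ∈ P, 0 ≤ Real.exp (t * f y) * g y := fun t y hy ↦
    mul_nonneg (Real.exp_nonneg _) (hg0 y hy)
  obtain ⟨κ, hκ, hlower⟩ := eventually_le_setIntegral_exp_mul hP hPx hf hg0 hg hgx hint
  have hdecay : Tendsto (fun t : ℝ ↦ (∫ y in P, g y ∂μ) / κ *
      (t ^ Module.finrank ℝ E * Real.exp (-c * t ^ (2 * b)))) atTop (𝓝 0) := by
    simpa using (tendsto_pow_mul_exp_neg_mul_rpow_atTop_nhds_zero (Module.finrank ℝ E)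
      (mul_pos two_pos hb) hc).const_mul ((∫ y in P, g y ∂μ) / κ)
  refine tendsto_setIntegral_inter_div_nhds_one (fun _ ↦ measurableSet_ball) hint ?_ ?_
  · filter_upwards [hlower, eventually_gt_atTop 0] with t hle ht
    exact (lt_of_lt_of_le (by positivity) hle).ne'
  refine squeeze_zero' (.of_forall fun t ↦ div_nonneg
    (setIntegral_nonneg (hP.diff measurableSet_ball) fun y hy ↦ hw0 t y hy.1)
    (setIntegral_nonneg hP (hw0 t))) ?_ hdecay
  filter_upwards [hlower, eventually_gt_atTop 0] with t hle ht
  have hg_nonneg : 0 ≤ ∫ y in P, g y ∂μ := setIntegral_nonneg hP hg0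
  have hupper := setIntegral_diff_ball_exp_mul_le hP hfle hgint hg0 (hint t) hc.le ht.le
    (Real.rpow_nonneg ht.le (-(1 / 2 : ℝ) + b))
  rw [mul_rpow_neg_half_add_sq ht] at hupper
  refine (div_le_div₀ (by positivity) hupper (by positivity) hle).trans_eq ?_
  field_simp

theorem stmt10_general (hP : IsCompact P) (hfc : ContinuousOn f P) (hx : x ∈ interior P)
    (hf : ContDiffAt ℝ 2 f x) (hlt : ∀ y ∈ P, y ≠ x → f y < f x)
    (hHess : ∀ v, v ≠ 0 → iteratedFDeriv ℝ 2 f x ![v, v] < 0)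
    (hgint : IntegrableOn g P μ) (hg : ContinuousAt g x) (hg0 : ∀ y ∈ P, 0 ≤ g y)
    (hgx : 0 < g x) {b : ℝ} (hb : 0 < b) :
    Tendsto (fun t : ℝ ↦
        (∫ y in P ∩ Metric.ball x (t ^ (-(1 / 2 : ℝ) + b)), Real.exp (t * f y) * g y ∂μ) /
          ∫ y in P, Real.exp (t * f y) * g y ∂μ)
      atTop (𝓝 1) := by
  have hPx : P ∈ 𝓝 x := mem_interior_iff_mem_nhds.1 hx
  have hmax : IsLocalMax f x := by
    filter_upwards [hPx] with y hy
    rcases eq_or_ne y x with rfl | hne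
    exacts [le_rfl, (hlt y hy hne).le]
  obtain ⟨c, hc, hfle⟩ := exists_forall_le_sub_mul_norm_sq hP hfc hlt
    (eventually_le_sub_mul_norm_sq_of_hessian_neg hf hmax.fderiv_eq_zero hHess)
  have hint : ∀ t : ℝ, IntegrableOn (fun y ↦ Real.exp (t * f y) * g y) P μ := fun t ↦
    hgint.continuousOn_mul (by fun_prop) hP
  exact tendsto_setIntegral_ball_div_of_le_sub_mul_norm_sq hP.measurableSet hPx
    (hf.differentiableAt (by simp)) hc hfle hgint hg0 hg hgx hint hb

end Laplace

/-- Laplace-method concentration: for a compact `P ⊂ ℝ^d` with nonempty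
interior, `f` smooth and strictly concave on `P` with unique interior maximizer `x*` at
which the Hessian is negative definite, and `g` smooth, nonnegative, bounded with
`g(x*) > 0`, the mass of `e^{nf} g` concentrates on the ball `B(x*, n^{−1/2+b})`. -/
theorem stmt10 {d : ℕ} (hd : 1 ≤ d)
    (P : Set (EuclideanSpace ℝ (Fin d))) (hP : IsCompact P)
    (hPint : (interior P).Nonempty)
    (f g : EuclideanSpace ℝ (Fin d) → ℝ)
    (hf : ContDiffOn ℝ (⊤ : ℕ∞) f P) (hconc : StrictConcaveOn ℝ P f)
    (xstar : EuclideanSpace ℝ (Fin d)) (hx : xstar ∈ interior P)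
    (hmax : IsMaxOn f P xstar)
    (huniq : ∀ y ∈ P, IsMaxOn f P y → y = xstar)
    (hHess : ∀ v : EuclideanSpace ℝ (Fin d), v ≠ 0 →
      (iteratedFDerivWithin ℝ 2 f P xstar) ![v, v] < 0)
    (hg : ContDiffOn ℝ (⊤ : ℕ∞) g P) (hg0 : ∀ x ∈ P, 0 ≤ g x)
    (hgbdd : BddAbove (g '' P)) (hgx : 0 < g xstar) :
    ∀ b ∈ Set.Ioo (0 : ℝ) (1 / 2),
      Tendsto (fun n : ℕ =>
          (∫ x in P ∩ Metric.ball xstar ((n : ℝ) ^ (-(1 / 2 : ℝ) + b)),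
              Real.exp (n * f x) * g x) /
          (∫ x in P, Real.exp (n * f x) * g x))
        atTop (𝓝 1) := by
  intro b hb
  have hP_nhds : P ∈ 𝓝 xstar := mem_interior_iff_mem_nhds.1 hx
  have hlt : ∀ y ∈ P, y ≠ xstar → f y < f xstar := fun y hy hne ↦
    (hmax hy).lt_of_ne fun heq ↦ hne (huniq y hy fun z hz ↦ (hmax hz).trans_eq heq.symm)
  simp only [iteratedFDerivWithin_eq_iteratedFDeriv_of_mem_nhds hP_nhds] at hHess
  exact (stmt10_general hP hf.continuousOn hx (contDiffAt_infty.1 (hf.contDiffAt hP_nhds) 2) hlt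
    hHess (hg.continuousOn.integrableOn_compact hP) (hg.continuousOn.continuousAt hP_nhds) hg0 hgx
    hb.1).comp tendsto_natCast_atTop_atTop

end
end

section
/- Let k ≥ 1, let A be a real symmetric k×k matrix, and let β > 0. Let S*_β be the unique maximizer over 𝒢 of S ↦ β tr(AS) + (1/2) log det S, and let q* = max_{S ∈ 𝒢} tr(AS). Then for every α ∈ (0, 1), tr(A S*_β) ≥ α q* + (1 − α) tr(A) + (k/(2β)) ln(1 − α). -/
open MeasureTheory Matrix Filter Topology

noncomputable section

/-!
A maximizer `S` of `tr(AS)` over `𝒢` may be singular, but `α S + (1 - α) I` is an admissible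
competitor for `S*_β`: all its eigenvalues are at least `1 - α`, so mixing with the identity costs
at most `-(k/2) log (1 - α)` in the entropy term. At `S*_β` itself the entropy term is nonpositive,
because the eigenvalues of a positive definite matrix with unit diagonal have mean `1` and
`log x ≤ x - 1`. Comparing the two values of the objective and dividing by `β` gives the bound.
-/

section Determinant

open scoped ComplexOrder

variable {n 𝕜 : Type*} [Fintype n] [DecidableEq n] [RCLike 𝕜] {M : Matrix n n 𝕜}

theorem det_add_smul_one_eq_prod_eigenvalues (hM : M.IsHermitian) (c : 𝕜) :
    (M + c • 1).det = ∏ i, ((hM.eigenvalues i : 𝕜) + c) := by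
  have eval_charpoly_neg : (M + c • 1).det = (-1) ^ Fintype.card n * M.charpoly.eval (-c) := by
    rw [eval_charpoly, ← det_neg, map_neg, neg_sub, sub_neg_eq_add, scalar_apply,
      smul_one_eq_diagonal]
  rw [eval_charpoly_neg, hM.charpoly_eq, Polynomial.eval_prod, ← Finset.card_univ,
    ← Finset.prod_const, ← Finset.prod_mul_distrib]
  refine Finset.prod_congr rfl fun i _ => ?_
  simp only [Polynomial.eval_sub, Polynomial.eval_X, Polynomial.eval_C]
  ring

theorem pow_card_le_det_add_smul_one (hM : M.PosSemidef) {c : 𝕜} (hc : 0 ≤ c) :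
    c ^ Fintype.card n ≤ (M + c • 1).det := by
  rw [det_add_smul_one_eq_prod_eigenvalues hM.isHermitian, ← Finset.card_univ,
    ← Finset.prod_const]
  exact Finset.prod_le_prod (fun _ _ => hc) fun i _ =>
    le_add_of_nonneg_left (RCLike.ofReal_nonneg.mpr (hM.eigenvalues_nonneg i))

theorem card_mul_log_le_log_det_smul_add_smul_one {S : Matrix n n ℝ} (hS : S.PosSemidef)
    {α : ℝ} (hα : α ∈ Set.Ico 0 1) :
    Fintype.card n * Real.log (1 - α) ≤ Real.log (α • S + (1 - α) • 1).det := by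
  have one_sub_pos : 0 < 1 - α := sub_pos.mpr hα.2
  rw [← Real.log_pow]
  exact Real.log_le_log (pow_pos one_sub_pos _)
    (pow_card_le_det_add_smul_one (hS.smul hα.1) one_sub_pos.le)

theorem log_re_det_le_re_trace_sub_card (hM : M.PosDef) :
    Real.log (RCLike.re M.det) ≤ RCLike.re M.trace - Fintype.card n := by
  have hH := hM.isHermitian
  calc Real.log (RCLike.re M.det) = Real.log (∏ i, hH.eigenvalues i) := by
        rw [hH.det_eq_prod_eigenvalues, ← RCLike.ofReal_prod, RCLike.ofReal_re]
    _ = ∑ i, Real.log (hH.eigenvalues i) :=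
        Real.log_prod fun i _ => (hM.eigenvalues_pos i).ne'
    _ ≤ ∑ i, (hH.eigenvalues i - 1) :=
        Finset.sum_le_sum fun i _ => Real.log_le_sub_one_of_pos (hM.eigenvalues_pos i)
    _ = RCLike.re M.trace - Fintype.card n := by
        rw [hH.trace_eq_sum_eigenvalues, ← RCLike.ofReal_sum, RCLike.ofReal_re]
        simp

theorem log_det_nonpos_of_diag_eq_one {S : Matrix n n ℝ} (hS : S.PosDef)
    (hdiag : ∀ i, S i i = 1) : Real.log S.det ≤ 0 := by
  have trace_eq : S.trace = Fintype.card n := by simp [trace, hdiag]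
  simpa [trace_eq] using log_re_det_le_re_trace_sub_card hS

end Determinant

section Perturbation

variable {k : ℕ} {S : Matrix (Fin k) (Fin k) ℝ} {α β : ℝ}

theorem gwObj_le_mul_trace (A : Matrix (Fin k) (Fin k) ℝ) (hS : S ∈ unitDiagPD k) :
    gwObj β A S ≤ β * (A * S).trace := by
  have log_det_nonpos := log_det_nonpos_of_diag_eq_one hS.1 hS.2
  unfold gwObj
  linarith

theorem smul_add_smul_one_mem_unitDiagPD (hS : S ∈ unitDiagPSD k) (hα : α ∈ Set.Ico 0 1) :
    α • S + (1 - α) • 1 ∈ unitDiagPD k :=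
  ⟨.posSemidef_add (hS.1.smul hα.1) (PosDef.one.smul (sub_pos.mpr hα.2)),
    fun i => by simp [hS.2 i]⟩

theorem le_gwObj_smul_add_smul_one (A : Matrix (Fin k) (Fin k) ℝ) (hS : S.PosSemidef)
    (hα : α ∈ Set.Ico 0 1) :
    β * (α * (A * S).trace + (1 - α) * A.trace) + k / 2 * Real.log (1 - α)
      ≤ gwObj β A (α • S + (1 - α) • 1) := by
  have trace_eq : (A * (α • S + (1 - α) • 1)).trace
      = α * (A * S).trace + (1 - α) * A.trace := by
    simp [mul_add]
  have log_det_ge := card_mul_log_le_log_det_smul_add_smul_one hS hα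
  rw [Fintype.card_fin] at log_det_ge
  rw [gwObj, trace_eq]
  linarith

end Perturbation

theorem stmt17_general {k : ℕ} (A : Matrix (Fin k) (Fin k) ℝ) {β : ℝ} (hβ : 0 < β)
    {Sstar : Matrix (Fin k) (Fin k) ℝ} (hmem : Sstar ∈ unitDiagPD k)
    (hmax : IsMaxOn (gwObj β A) (unitDiagPD k) Sstar)
    {S : Matrix (Fin k) (Fin k) ℝ} (hS : S ∈ unitDiagPSD k) {α : ℝ} (hα : α ∈ Set.Ico 0 1) :
    α * (A * S).trace + (1 - α) * A.trace + (k / (2 * β)) * Real.log (1 - α)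
      ≤ (A * Sstar).trace := by
  refine le_of_mul_le_mul_left ?_ hβ
  calc β * (α * (A * S).trace + (1 - α) * A.trace + (k / (2 * β)) * Real.log (1 - α))
      = β * (α * (A * S).trace + (1 - α) * A.trace) + k / 2 * Real.log (1 - α) := by
        field_simp
    _ ≤ gwObj β A (α • S + (1 - α) • 1) := le_gwObj_smul_add_smul_one A hS.1 hα
    _ ≤ gwObj β A Sstar := hmax (smul_add_smul_one_mem_unitDiagPD hS hα)
    _ ≤ β * (A * Sstar).trace := gwObj_le_mul_trace A hmem

/-- With `S*_β` the unique maximizer over `𝒢` of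
`S ↦ β tr(AS) + (1/2) log det S` and `q* = max_{S ∈ 𝒢} tr(AS)`, one has, for all
`α ∈ (0,1)`, `tr(A S*_β) ≥ α q* + (1−α) tr(A) + (k/(2β)) ln(1−α)`. -/
theorem stmt17 {k : ℕ} (hk : 1 ≤ k) (A : Matrix (Fin k) (Fin k) ℝ) (hA : A.IsSymm)
    (β : ℝ) (hβ : 0 < β) (Sstar : Matrix (Fin k) (Fin k) ℝ)
    (hmem : Sstar ∈ unitDiagPD k) (hmax : IsMaxOn (gwObj β A) (unitDiagPD k) Sstar)
    (huniq : ∀ T ∈ unitDiagPD k, IsMaxOn (gwObj β A) (unitDiagPD k) T → T = Sstar)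
    (qstar : ℝ) (hq : IsGreatest ((fun S => (A * S).trace) '' unitDiagPSD k) qstar) :
    ∀ α ∈ Set.Ioo (0 : ℝ) 1,
      α * qstar + (1 - α) * A.trace + ((k : ℝ) / (2 * β)) * Real.log (1 - α)
        ≤ (A * Sstar).trace := by
  obtain ⟨⟨S, hS, rfl⟩, -⟩ := hq
  exact fun α hα => stmt17_general A hβ hmem hmax hS (Set.Ioo_subset_Ico_self hα)

end
end
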